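/- For all d₁, d₂ ∈ [0, π/4] and d₃ ∈ [|d₁−d₂|, d₁+d₂] with d₁, d₃ ∈ (0, π/4+π/4], the inequality d₂² ≥ d₁² − 2 d₁ d₃ (cos d₂ − cos d₃ cos d₁)/(sin d₁ sin d₃) + (1/2) d₃² holds (with the convention that the middle term is interpreted by continuity when d₁ = 0 or d₃ = 0). -/

import Mathlib

open Real

/-!
The squared distance is a convex function of its cosine: the derivative of `u ↦ arccos u ^ 2` at
`u = cos a` is `-2 a / sin a`, and `a / sin a` increases on `(0, π)`. The tangent line at `cos d₁`
gives

  `d₂² ≥ d₁² - 2 (d₁ / sin d₁) (cos d₂ - cos d₁)`.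

Replacing `cos d₂ - cos d₁` by `(d₃ / sin d₃) (cos d₂ - cos d₃ cos d₁)` lowers the right-hand side
by `2 (d₁ / sin d₁)` times

  `cos d₁ (1 - d₃ cot d₃) + cos d₂ (d₃ / sin d₃ - 1)`.

The two brackets are nonnegative and add up to `d₃ tan (d₃ / 2) ≥ d₃² / 2`. Since `sin d₁ ≤ d₁`,
and `cos d₁, cos d₂ ≥ cos r ≥ 0` when `d₁, d₂ ≤ r ≤ π / 2`, this leaves room for `cos r · d₃²`.
-/

theorem mul_sin_le_mul_sin_of_le {x y : ℝ} (hx : 0 ≤ x) (hxy : x ≤ y) (hy : y ≤ π) :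
    x * sin y ≤ y * sin x := by
  rcases hx.eq_or_lt with rfl | hx
  · simp
  have hy₀ : 0 < y := hx.trans_le hxy
  have hconc := strictConcaveOn_sin_Icc.concaveOn.2 ⟨le_rfl, pi_nonneg⟩ ⟨hy₀.le, hy⟩
    (sub_nonneg.2 ((div_le_one hy₀).2 hxy)) (div_pos hx hy₀).le (sub_add_cancel 1 (x / y))
  simp only [smul_eq_mul, sin_zero, mul_zero, zero_add, div_mul_cancel₀ x hy₀.ne'] at hconc
  rwa [div_mul_eq_mul_div, div_le_iff₀' hy₀] at hconc

theorem mul_cos_le_sin {x : ℝ} (hx₀ : 0 ≤ x) (hx : x ≤ π) : x * cos x ≤ sin x := by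
  rcases lt_or_ge x (π / 2) with hlt | hge
  · have hcos : 0 < cos x := cos_pos_of_mem_Ioo ⟨by linarith [pi_pos], hlt⟩
    rw [← le_div_iff₀ hcos, ← tan_eq_sin_div_cos]
    exact le_tan hx₀ hlt
  · exact (mul_nonpos_of_nonneg_of_nonpos hx₀
      (cos_nonpos_of_pi_div_two_le_of_le hge (by linarith [pi_pos]))).trans
      (sin_nonneg_of_nonneg_of_le_pi hx₀ hx)

theorem mul_sin_le_two_mul_one_sub_cos {x : ℝ} (hx₀ : 0 ≤ x) (hx : x ≤ 2 * π) :
    x * sin x ≤ 2 * (1 - cos x) := by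
  obtain ⟨y, rfl⟩ : ∃ y, x = 2 * y := ⟨x / 2, by ring⟩
  have hy₀ : 0 ≤ y := by linarith
  have hy : y ≤ π := by linarith
  calc
    2 * y * sin (2 * y) = 4 * sin y * (y * cos y) := by rw [sin_two_mul]; ring
    _ ≤ 4 * sin y * sin y := by
      have hsin := sin_nonneg_of_nonneg_of_le_pi hy₀ hy
      gcongr
      exact mul_cos_le_sin hy₀ hy
    _ = 2 * (1 - cos (2 * y)) := by rw [cos_two_mul']; linear_combination 2 * sin_sq_add_cos_sq y

theorem hasDerivAt_arccos_sq {x : ℝ} (hx : x ∈ Set.Ioo (-1) 1) :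
    HasDerivAt (fun u => arccos u ^ 2) (-2 * (arccos x / sin (arccos x))) x := by
  refine ((hasDerivAt_arccos hx.1.ne' hx.2.ne).pow 2).congr_deriv ?_
  rw [sin_arccos]
  ring

theorem convexOn_arccos_sq : ConvexOn ℝ (Set.Icc (-1) 1) (fun u => arccos u ^ 2) := by
  refine MonotoneOn.convexOn_of_deriv (convex_Icc _ _) (continuous_arccos.pow 2).continuousOn
    ?_ ?_ <;> rw [interior_Icc]
  · exact fun x hx => (hasDerivAt_arccos_sq hx).differentiableAt.differentiableWithinAt
  · intro x hx y hy hxy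
    have sin_arccos_pos {u : ℝ} (hu : u ∈ Set.Ioo (-1) 1) : 0 < sin (arccos u) :=
      sin_pos_of_pos_of_lt_pi (arccos_pos.2 hu.2) (arccos_lt_pi.2 hu.1)
    have hratio : arccos y / sin (arccos y) ≤ arccos x / sin (arccos x) := by
      rw [div_le_div_iff₀ (sin_arccos_pos hy) (sin_arccos_pos hx)]
      exact mul_sin_le_mul_sin_of_le (arccos_nonneg y) (arccos_le_arccos hxy) (arccos_le_pi x)
    rw [(hasDerivAt_arccos_sq hx).deriv, (hasDerivAt_arccos_sq hy).deriv]
    linarith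

theorem add_mul_sub_le_of_convexOn_of_hasDerivAt {S : Set ℝ} {f : ℝ → ℝ} {f' x y : ℝ}
    (hf : ConvexOn ℝ S f) (hx : x ∈ S) (hy : y ∈ S) (hf' : HasDerivAt f f' x) :
    f x + f' * (y - x) ≤ f y := by
  rcases lt_trichotomy x y with hxy | rfl | hxy
  · have hslope := hf.le_slope_of_hasDerivAt hx hy hxy hf'
    rw [slope_def_field, le_div_iff₀ (sub_pos.2 hxy)] at hslope
    linarith
  · simp
  · have hslope := hf.slope_le_of_hasDerivAt hy hx hxy hf'
    rw [slope_def_field, div_le_iff₀ (sub_pos.2 hxy)] at hslope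
    linarith

theorem sq_sub_mul_cos_sub_cos_le_sq {a b : ℝ} (ha : a ∈ Set.Ioo 0 π) (hb : b ∈ Set.Icc 0 π) :
    a ^ 2 - 2 * (a / sin a) * (cos b - cos a) ≤ b ^ 2 := by
  have hcos : cos a ∈ Set.Ioo (-1) 1 := by
    rw [← cos_pi, ← cos_zero]
    exact ⟨cos_lt_cos_of_nonneg_of_le_pi ha.1.le le_rfl ha.2,
      cos_lt_cos_of_nonneg_of_le_pi le_rfl ha.2.le ha.1⟩
  have htangent := add_mul_sub_le_of_convexOn_of_hasDerivAt convexOn_arccos_sq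
    (Set.Ioo_subset_Icc_self hcos) (cos_mem_Icc b) (hasDerivAt_arccos_sq hcos)
  rw [arccos_cos ha.1.le ha.2.le, arccos_cos hb.1 hb.2] at htangent
  linarith

theorem mul_sq_mul_sin_le {c p q x : ℝ} (hc : 0 ≤ c) (hp : c ≤ p) (hq : c ≤ q)
    (hx₀ : 0 ≤ x) (hx : x ≤ π) :
    c * x ^ 2 * sin x ≤ 2 * (p * (sin x - x * cos x) + q * (x - sin x)) :=
  calc
    c * x ^ 2 * sin x = c * x * (x * sin x) := by ring
    _ ≤ c * x * (2 * (1 - cos x)) := mul_le_mul_of_nonneg_left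
      (mul_sin_le_two_mul_one_sub_cos hx₀ (by linarith)) (mul_nonneg hc hx₀)
    _ = 2 * (c * (sin x - x * cos x) + c * (x - sin x)) := by ring
    _ ≤ 2 * (p * (sin x - x * cos x) + q * (x - sin x)) := by
      have hcos := sub_nonneg.2 (mul_cos_le_sin hx₀ hx)
      have hsin := sub_nonneg.2 (sin_le hx₀)
      gcongr

theorem stmt_11_general {r : ℝ} (hr : r ≤ π / 2) (d₁ d₂ d₃ : ℝ)
    (h1 : d₁ ∈ Set.Ioc 0 r) (h2 : d₂ ∈ Set.Icc 0 r) (h3 : d₃ ∈ Set.Ioo 0 π) :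
    d₂ ^ 2 ≥ d₁ ^ 2 - 2 * d₁ * d₃ * (cos d₂ - cos d₃ * cos d₁) / (sin d₁ * sin d₃)
      + cos r * d₃ ^ 2 := by
  have hd₁ : d₁ < π := by linarith [h1.2, pi_pos]
  have hd₂ : d₂ ≤ π := by linarith [h2.2, pi_pos]
  have hsin₁ : 0 < sin d₁ := sin_pos_of_pos_of_lt_pi h1.1 hd₁
  have hsin₃ : 0 < sin d₃ := sin_pos_of_mem_Ioo h3
  have cos_r_le {d : ℝ} (hd₀ : 0 ≤ d) (hd : d ≤ r) : cos r ≤ cos d :=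
    cos_le_cos_of_nonneg_of_le_pi hd₀ (by linarith [pi_pos]) hd
  have hcos_r : 0 ≤ cos r := cos_nonneg_of_mem_Icc ⟨by linarith [h2.1.trans h2.2, pi_pos], hr⟩
  set gain := cos d₁ * (sin d₃ - d₃ * cos d₃) + cos d₂ * (d₃ - sin d₃) with hgain_def
  have htangent := sq_sub_mul_cos_sub_cos_le_sq ⟨h1.1, hd₁⟩ ⟨h2.1, hd₂⟩
  have hgain : cos r * d₃ ^ 2 ≤ 2 * gain / sin d₃ := (le_div_iff₀ hsin₃).2 <|
    mul_sq_mul_sin_le hcos_r (cos_r_le h1.1.le h1.2) (cos_r_le h2.1 h2.2) h3.1.le h3.2.le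
  have hscaled : 2 * gain / sin d₃ ≤ d₁ / sin d₁ * (2 * gain / sin d₃) :=
    le_mul_of_one_le_left (hgain.trans' (by positivity)) ((one_le_div hsin₁).2 (sin_le h1.1.le))
  have hsplit : 2 * d₁ * d₃ * (cos d₂ - cos d₃ * cos d₁) / (sin d₁ * sin d₃)
      = 2 * (d₁ / sin d₁) * (cos d₂ - cos d₁) + d₁ / sin d₁ * (2 * gain / sin d₃) := by
    rw [hgain_def]
    field_simp
    ring
  linarith

theorem stmt_11 (d₁ d₂ d₃ : ℝ)
    (h1 : d₁ ∈ Set.Icc 0 (π / 4)) (h2 : d₂ ∈ Set.Icc 0 (π / 4))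
    (h3 : d₃ ∈ Set.Icc |d₁ - d₂| (d₁ + d₂))
    (h1pos : 0 < d₁) (h3pos : 0 < d₃) :
    d₂ ^ 2 ≥ d₁ ^ 2 - 2 * d₁ * d₃ * (cos d₂ - cos d₃ * cos d₁) / (sin d₁ * sin d₃)
      + 1 / 2 * d₃ ^ 2 := by
  have hπ := pi_pos
  rw [← cos_pi_div_three]
  exact stmt_11_general (by linarith) d₁ d₂ d₃ ⟨h1pos, by linarith [h1.2]⟩
    ⟨h2.1, by linarith [h2.2]⟩ ⟨h3pos, by linarith [h3.2, h1.2, h2.2]⟩
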